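/- Let n = 2 and N₀ > 0. Then there exist θ₀ ∈ (0,1/2) and an integer k₀ ≥ 1 with the following property: for every harmonic function u on the unit disc B₁ ⊂ ℝ² satisfying u(0) = 0, ∫_{B_{1/2}} u² dx = 1 and N(0,u,r) ≤ N₀ for every r ∈ (0,1), and for every 0 < r < θ₀, one has inf_{ρ ∈ [r/2, 3r/2]} C(u,B_ρ) ≤ k₀, where C(u,B_ρ) denotes the number of connected components of {u ≠ 0} ∩ B_ρ. -/

import Mathlib

open MeasureTheory Metric Filter

/-- The Laplacian of `u : ℝⁿ → ℝ` at `x`, as the sum of second partial derivatives. -/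
noncomputable def lapl {n : ℕ} (u : EuclideanSpace ℝ (Fin n) → ℝ)
    (x : EuclideanSpace ℝ (Fin n)) : ℝ :=
  ∑ i, fderiv ℝ (fun y => fderiv ℝ u y (EuclideanSpace.single i 1)) x (EuclideanSpace.single i 1)

/-- `u` is harmonic on all of ℝⁿ: it is C² and its Laplacian vanishes identically. -/
def HarmonicFn {n : ℕ} (u : EuclideanSpace ℝ (Fin n) → ℝ) : Prop :=
  ContDiff ℝ 2 u ∧ ∀ x, lapl u x = 0

/-- `u` is harmonic on the (open) set `Ω`: it is C² on `Ω` and its Laplacian vanishes on `Ω`. -/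
def HarmonicFnOn {n : ℕ} (u : EuclideanSpace ℝ (Fin n) → ℝ)
    (Ω : Set (EuclideanSpace ℝ (Fin n))) : Prop :=
  ContDiffOn ℝ 2 u Ω ∧ ∀ x ∈ Ω, lapl u x = 0

/-- The Dirichlet integral `D(x₀,u,r) = ∫_{B_r(x₀)} |∇u|² dx`. -/
noncomputable def DInt {n : ℕ} (u : EuclideanSpace ℝ (Fin n) → ℝ)
    (x₀ : EuclideanSpace ℝ (Fin n)) (r : ℝ) : ℝ :=
  ∫ x in Metric.ball x₀ r, ‖gradient u x‖ ^ 2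

/-- The height `H(x₀,u,r) = ∫_{∂B_r(x₀)} u² dσ`, with respect to the
`(n-1)`-dimensional Hausdorff measure on the sphere. -/
noncomputable def HInt {n : ℕ} (u : EuclideanSpace ℝ (Fin n) → ℝ)
    (x₀ : EuclideanSpace ℝ (Fin n)) (r : ℝ) : ℝ :=
  ∫ x in Metric.sphere x₀ r, (u x) ^ 2 ∂ μH[(n : ℝ) - 1]

/-- The Almgren frequency `N(x₀,u,r) = r · D(x₀,u,r) / H(x₀,u,r)`. -/
noncomputable def freqN {n : ℕ} (u : EuclideanSpace ℝ (Fin n) → ℝ)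
    (x₀ : EuclideanSpace ℝ (Fin n)) (r : ℝ) : ℝ :=
  r * DInt u x₀ r / HInt u x₀ r

/-- The set of connected components of a subset `S` of a topological space. -/
def nodalComponents {X : Type*} [TopologicalSpace X] (S : Set X) : Set (Set X) :=
  {C | ∃ x ∈ S, connectedComponentIn S x = C}

/-!
Write `u = Re f` with `f` holomorphic and `f 0` real. By Parseval, a bound on the frequency at one
radius `s` forces the Taylor coefficients of `f` of low degree to carry at least half of the mean of
`‖f‖²` over `∂B_s`, so that on `B_{s/2}` the function `f` is at most `4 (s/ρ)^K` times the maximum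
of `|u|` over `∂B_ρ`. Since `t ↦ u (ρ e^{it})` extends to a holomorphic function of a complex angle
`t`, zero counting in the style of Jensen bounds the number of zeros of `u` on `∂B_ρ`. By the
maximum principle every component of `{u ≠ 0} ∩ B_ρ` reaches one of the arcs into which these zeros
divide the circle, and two components reaching the same arc coincide.
-/

open scoped Real Topology ComplexConjugate
open Real (circleAverage circleAverage_def circleAverage_congr_sphere circleAverage_fun_smul)
open Complex (I)

section Nodal

lemma closure_connectedComponentIn_inter_subset {X : Type*} [TopologicalSpace X] {S : Set X}
    {x : X} : closure (connectedComponentIn S x) ∩ S ⊆ connectedComponentIn S x := by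
  by_cases hx : x ∈ S
  · have hsub : connectedComponentIn S x ⊆ closure (connectedComponentIn S x) ∩ S :=
      Set.subset_inter subset_closure (connectedComponentIn_subset S x)
    exact (isPreconnected_connectedComponentIn.subset_closure hsub
      Set.inter_subset_left).subset_connectedComponentIn (hsub (mem_connectedComponentIn hx))
      Set.inter_subset_right
  · simp only [connectedComponentIn_eq_empty hx, closure_empty, Set.empty_inter, Set.Subset.refl]

lemma nodalComponents_image {X Y : Type*} [TopologicalSpace X] [TopologicalSpace Y] (e : X ≃ₜ Y)
    (S : Set X) : nodalComponents (e '' S) = Set.image e '' nodalComponents S := by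
  ext C
  simp only [nodalComponents, Set.mem_image, Set.mem_ofPred_eq, exists_exists_and_eq_and]
  refine exists_congr fun x => and_congr_right fun hx => ?_
  rw [e.image_connectedComponentIn hx]

variable {E : Type*} [AddCommGroup E] [Module ℝ E] [TopologicalSpace E] [IsTopologicalAddGroup E]
  [ContinuousSMul ℝ E] [LocallyConvexSpace ℝ E] {U V A : Set E} {p x y : E}

lemma exists_mem_nhds_inter_subset_connectedComponentIn (hU : Convex ℝ U) (hV : IsOpen V)
    (hpU : p ∈ closure U) (hpV : p ∈ V) :
    ∃ W ∈ 𝓝 p, ∃ z, W ∩ U ⊆ connectedComponentIn (U ∩ V) z := by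
  obtain ⟨W, ⟨hW, hWconv⟩, hWV⟩ :=
    (LocallyConvexSpace.convex_basis (𝕜 := ℝ) p).mem_iff.1 (hV.mem_nhds hpV)
  obtain ⟨z, hz⟩ := mem_closure_iff_nhds.1 hpU W hW
  exact ⟨W, hW, z, (hWconv.inter hU).isPreconnected.subset_connectedComponentIn hz
    fun q hq => ⟨hq.2, hWV hq.1⟩⟩

lemma exists_mem_nhds_inter_subset_of_mem_closure (hU : Convex ℝ U) (hV : IsOpen V) (hpV : p ∈ V)
    (hp : p ∈ closure (connectedComponentIn (U ∩ V) x)) :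
    ∃ W ∈ 𝓝 p, W ∩ U ⊆ connectedComponentIn (U ∩ V) x := by
  have hsub : connectedComponentIn (U ∩ V) x ⊆ U :=
    (connectedComponentIn_subset _ _).trans Set.inter_subset_left
  obtain ⟨W, hW, z, hWz⟩ :=
    exists_mem_nhds_inter_subset_connectedComponentIn hU hV (closure_mono hsub hp) hpV
  obtain ⟨q, hqW, hqx⟩ := mem_closure_iff_nhds.1 hp W hW
  refine ⟨W, hW, ?_⟩
  rwa [connectedComponentIn_eq hqx, ← connectedComponentIn_eq (hWz ⟨hqW, hsub hqx⟩)]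

lemma connectedComponentIn_eq_of_mem_closure (hU : Convex ℝ U) (hV : IsOpen V) (hpV : p ∈ V)
    (hx : p ∈ closure (connectedComponentIn (U ∩ V) x))
    (hy : p ∈ closure (connectedComponentIn (U ∩ V) y)) :
    connectedComponentIn (U ∩ V) x = connectedComponentIn (U ∩ V) y := by
  obtain ⟨W, hW, hWx⟩ := exists_mem_nhds_inter_subset_of_mem_closure hU hV hpV hx
  obtain ⟨q, hqW, hqy⟩ := mem_closure_iff_nhds.1 hy W hW
  rw [connectedComponentIn_eq hqy,
    connectedComponentIn_eq (hWx ⟨hqW, (connectedComponentIn_subset _ _ hqy).1⟩)]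

lemma subset_closure_connectedComponentIn (hU : Convex ℝ U) (hV : IsOpen V)
    (hA : IsPreconnected A) (hAU : A ⊆ closure U) (hAV : A ⊆ V) (hpA : p ∈ A)
    (hp : p ∈ closure (connectedComponentIn (U ∩ V) x)) :
    A ⊆ closure (connectedComponentIn (U ∩ V) x) := by
  set C := connectedComponentIn (U ∩ V) x
  have locally_constant : ∀ a ∈ A, ∀ᶠ q in 𝓝[A] a, a ∈ closure C ↔ q ∈ closure C := by
    intro a haA
    by_cases ha : a ∈ closure C
    · obtain ⟨W, hW, hWx⟩ := exists_mem_nhds_inter_subset_of_mem_closure hU hV (hAV haA) ha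
      filter_upwards [self_mem_nhdsWithin, mem_nhdsWithin_of_mem_nhds (interior_mem_nhds.2 hW)]
        with q hqA hqW
      have hq : q ∈ closure (interior W ∩ U) := isOpen_interior.inter_closure ⟨hqW, hAU hqA⟩
      exact iff_of_true ha (closure_mono
        ((Set.inter_subset_inter_left U interior_subset).trans hWx) hq)
    · filter_upwards [mem_nhdsWithin_of_mem_nhds (isClosed_closure.isOpen_compl.mem_nhds ha)]
        with q hq
      exact iff_of_false ha hq
  exact fun q hqA => (hA.induction₂ (fun a b => a ∈ closure C ↔ b ∈ closure C) locally_constant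
    (fun _ _ _ _ _ _ => Iff.trans) (fun _ _ _ _ => Iff.symm) hpA hqA).1 hp

theorem nodalComponents_finite_and_ncard_le (hU : Convex ℝ U) (hV : IsOpen V) {ι : Type*}
    [Finite ι] {A : ι → Set E} (hA : ∀ i, IsPreconnected (A i)) (hAU : ∀ i, A i ⊆ closure U)
    (hAV : ∀ i, A i ⊆ V)
    (hmeet : ∀ x ∈ U ∩ V, ∃ i, (A i ∩ closure (connectedComponentIn (U ∩ V) x)).Nonempty) :
    (nodalComponents (U ∩ V)).Finite ∧ (nodalComponents (U ∩ V)).ncard ≤ Nat.card ι := by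
  have hmeet' : ∀ C : nodalComponents (U ∩ V), ∃ i, (A i ∩ closure C.1).Nonempty := by
    rintro ⟨_, x, hx, rfl⟩
    exact hmeet x hx
  choose i hi using hmeet'
  have hinj : Function.Injective i := by
    rintro ⟨_, x, hx, rfl⟩ ⟨_, y, hy, rfl⟩ hxy
    obtain ⟨p, hpA, hpx⟩ := hi ⟨_, x, hx, rfl⟩
    obtain ⟨q, hqA, hqy⟩ := hi ⟨_, y, hy, rfl⟩
    rw [← hxy] at hqA
    exact Subtype.ext (connectedComponentIn_eq_of_mem_closure hU hV (hAV _ hqA)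
      (subset_closure_connectedComponentIn hU hV (hA _) (hAU _) (hAV _) hpA hpx hqA) hqy)
  exact ⟨Set.finite_coe_iff.1 (Finite.of_injective i hinj), Nat.card_le_card_of_injective i hinj⟩

lemma ordConnected_setOf_card_filter_lt_eq {α : Type*} [LinearOrder α] (Z : Finset α) (k : ℕ) :
    {t | t ∉ Z ∧ (Z.filter (· < t)).card = k}.OrdConnected := by
  refine ⟨fun s hs t ht w hw => ?_⟩
  have hsw : Z.filter (· < s) ⊆ Z.filter (· < w) := fun z hz => by
    rw [Finset.mem_filter] at hz ⊢
    exact ⟨hz.1, hz.2.trans_le hw.1⟩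
  have hwt : Z.filter (· < w) ⊆ Z.filter (· < t) := fun z hz => by
    rw [Finset.mem_filter] at hz ⊢
    exact ⟨hz.1, hz.2.trans_le hw.2⟩
  refine ⟨fun hwZ => ?_, le_antisymm (ht.2 ▸ Finset.card_le_card hwt)
    (hs.2 ▸ Finset.card_le_card hsw)⟩
  have hst : Z.filter (· < s) = Z.filter (· < t) :=
    Finset.eq_of_subset_of_card_le (hsw.trans hwt) (ht.2.trans hs.2.symm).le
  have hwt' : w < t := hw.2.lt_of_ne fun h => ht.1 (h ▸ hwZ)
  have hws : w ∈ Z.filter (· < s) := hst ▸ Finset.mem_filter.2 ⟨hwZ, hwt'⟩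
  exact hw.1.not_gt (Finset.mem_filter.1 hws).2

theorem nodalComponents_finite_and_ncard_le_of_path (hU : Convex ℝ U) (hV : IsOpen V) {γ : ℝ → E}
    {a b : ℝ} (hγ : ContinuousOn γ (Set.Icc a b)) (hγU : ∀ t ∈ Set.Icc a b, γ t ∈ closure U)
    {Z : Finset ℝ} (hZ : ∀ t ∈ Set.Icc a b, t ∈ Z ↔ γ t ∉ V)
    (hmeet : ∀ x ∈ U ∩ V, ∃ t ∈ Set.Icc a b, γ t ∈ V ∧
      γ t ∈ closure (connectedComponentIn (U ∩ V) x)) :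
    (nodalComponents (U ∩ V)).Finite ∧ (nodalComponents (U ∩ V)).ncard ≤ Z.card + 1 := by
  let J : Fin (Z.card + 1) → Set ℝ :=
    fun k => Set.Icc a b ∩ {t | t ∉ Z ∧ (Z.filter (· < t)).card = k}
  have hJ : ∀ k, IsPreconnected (J k) := fun k =>
    (Set.ordConnected_Icc.inter (ordConnected_setOf_card_filter_lt_eq Z k)).isPreconnected
  have hcard := nodalComponents_finite_and_ncard_le hU hV (A := fun k => γ '' J k)
    (fun k => (hJ k).image γ (hγ.mono Set.inter_subset_left))
    (fun k => Set.image_subset_iff.2 fun t ht => hγU t ht.1)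
    (fun k => Set.image_subset_iff.2 fun t ht => not_not.1 (mt (hZ t ht.1).2 ht.2.1))
  rw [Nat.card_fin] at hcard
  refine hcard fun x hx => ?_
  obtain ⟨t, ht, htV, htx⟩ := hmeet x hx
  exact ⟨⟨_, Nat.lt_succ_of_le (Finset.card_filter_le Z (· < t))⟩, γ t,
    ⟨t, ⟨ht, fun h => (hZ t ht).1 h htV, rfl⟩, rfl⟩, htx⟩

end Nodal

section PowerSeries

variable {a : ℕ → ℂ} {f g : ℂ → ℂ} {R s t ρ : ℝ} {K : ℕ}

lemma norm_eq_of_mem_sphere_zero_abs {z : ℂ} (hz : z ∈ sphere (0 : ℂ) |t|) : ‖z‖ = |t| :=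
  mem_sphere_zero_iff_norm.1 hz

lemma hasSum_circleAverage_of_norm_le {ι : Type*} [Countable ι] {F : ι → ℂ → ℂ} {c : ℂ}
    {bound : ι → ℝ} (hF : ∀ i, Continuous (F i))
    (hbound : ∀ i, ∀ z ∈ sphere c |R|, ‖F i z‖ ≤ bound i) (hsum : Summable bound)
    (h : ∀ z ∈ sphere c |R|, HasSum (fun i => F i z) (g z)) :
    HasSum (fun i => circleAverage (F i) c R) (circleAverage g c R) := by
  simp only [circleAverage_def]
  refine (intervalIntegral.hasSum_integral_of_dominated_convergence (fun i _ => bound i)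
    (fun i => ((hF i).comp (continuous_circleMap c R)).aestronglyMeasurable)
    (fun i => .of_forall fun θ _ => hbound i _ (circleMap_mem_sphere' c R θ))
    (.of_forall fun _ _ => hsum) intervalIntegrable_const
    (.of_forall fun θ _ => h _ (circleMap_mem_sphere' c R θ))).const_smul _

lemma circleAverage_conj {c : ℂ} (hf : CircleIntegrable f c R) :
    circleAverage (fun z => conj (f z)) c R = conj (circleAverage f c R) :=
  (Complex.conjCLE : ℂ →L[ℝ] ℂ).circleAverage_comp_comm hf

lemma circleAverage_pow_mul_conj_pow_of_le {j k : ℕ} (hkj : k ≤ j) :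
    circleAverage (fun z => z ^ j * conj (z ^ k)) 0 t = if j = k then (t : ℂ) ^ (2 * k) else 0 := by
  have hsphere : Set.EqOn (fun z : ℂ => z ^ j * conj (z ^ k))
      (fun z => ((t : ℂ) ^ (2 * k)) • z ^ (j - k)) (sphere 0 |t|) := by
    intro z hz
    have hzz : z * conj z = (t : ℂ) ^ 2 := by
      rw [Complex.mul_conj, Complex.normSq_eq_norm_sq, norm_eq_of_mem_sphere_zero_abs hz, sq_abs,
        Complex.ofReal_pow]
    obtain ⟨i, rfl⟩ := Nat.exists_eq_add_of_le hkj
    simp only [map_pow, smul_eq_mul, Nat.add_sub_cancel_left, pow_mul, ← hzz]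
    ring
  have hmean : circleAverage (fun z : ℂ => z ^ (j - k)) 0 t = 0 ^ (j - k) :=
    ((differentiable_id.pow (j - k)).diffContOnCl).circleAverage
  rw [circleAverage_congr_sphere hsphere, circleAverage_fun_smul, hmean]
  rcases hkj.eq_or_lt with rfl | h
  · simp
  · simp [h.ne', Nat.sub_ne_zero_of_lt h]

lemma circleAverage_pow_mul_conj_pow (j k : ℕ) :
    circleAverage (fun z => z ^ j * conj (z ^ k)) 0 t = if j = k then (t : ℂ) ^ (2 * k) else 0 := by
  rcases le_total k j with hkj | hjk
  · exact circleAverage_pow_mul_conj_pow_of_le hkj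
  · have hswap : (fun z : ℂ => z ^ j * conj (z ^ k)) = fun z => conj (z ^ k * conj (z ^ j)) := by
      funext z
      rw [map_mul, Complex.conj_conj, mul_comm]
    rw [hswap, circleAverage_conj ((Continuous.continuousOn (by fun_prop)).circleIntegrable'),
      circleAverage_pow_mul_conj_pow_of_le hjk]
    rcases eq_or_ne j k with rfl | h
    · simp
    · simp [h, h.symm]

lemma circleAverage_const_mul_pow_mul_conj (j k : ℕ) :
    circleAverage (fun z => a j * z ^ j * conj (a k * z ^ k)) 0 t =
      if j = k then ((‖a k‖ ^ 2 * t ^ (2 * k) : ℝ) : ℂ) else 0 := by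
  have hsmul : (fun z => a j * z ^ j * conj (a k * z ^ k)) =
      fun z => (a j * conj (a k)) • (z ^ j * conj (z ^ k)) := by
    funext z
    rw [map_mul, smul_eq_mul]
    ring
  rw [hsmul, circleAverage_fun_smul, circleAverage_pow_mul_conj_pow]
  split_ifs with hjk
  · rw [hjk, smul_eq_mul, Complex.mul_conj, Complex.normSq_eq_norm_sq]
    push_cast
    ring
  · exact smul_zero _

theorem hasSum_circleAverage_norm_sq
    (h : ∀ z ∈ sphere (0 : ℂ) |t|, HasSum (fun k => a k * z ^ k) (g z)) :
    HasSum (fun k => ‖a k‖ ^ 2 * t ^ (2 * k)) (circleAverage (fun z => ‖g z‖ ^ 2) 0 t) := by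
  have hsum : Summable fun k => ‖a k‖ * |t| ^ k := by
    have ht : (t : ℂ) ∈ sphere (0 : ℂ) |t| := by simp
    simpa using (h t ht).summable.norm
  have hdouble : HasSum
      (fun p : ℕ × ℕ => circleAverage (fun z => a p.1 * z ^ p.1 * conj (a p.2 * z ^ p.2)) 0 t)
      (circleAverage (fun z => g z * conj (g z)) 0 t) := by
    have hsum_mul := hsum.mul_of_nonneg hsum (fun k => by positivity) fun k => by positivity
    have norm_term : ∀ z ∈ sphere (0 : ℂ) |t|, ∀ p : ℕ × ℕ,
        ‖a p.1 * z ^ p.1 * conj (a p.2 * z ^ p.2)‖ =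
          ‖a p.1‖ * |t| ^ p.1 * (‖a p.2‖ * |t| ^ p.2) := by
      intro z hz p
      simp only [norm_mul, norm_pow, RCLike.norm_conj, norm_eq_of_mem_sphere_zero_abs hz]
    refine hasSum_circleAverage_of_norm_le
      (F := fun (p : ℕ × ℕ) z => a p.1 * z ^ p.1 * conj (a p.2 * z ^ p.2)) (fun p => by fun_prop)
      (fun p z hz => (norm_term z hz p).le) hsum_mul fun z hz => ?_
    have hsummable : Summable fun p : ℕ × ℕ => a p.1 * z ^ p.1 * conj (a p.2 * z ^ p.2) :=
      .of_norm (hsum_mul.congr fun p => (norm_term z hz p).symm)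
    exact HasSum.mul (f := fun k => a k * z ^ k) (g := fun k => conj (a k * z ^ k)) (h z hz)
      (Complex.hasSum_conj'.2 (h z hz)) hsummable
  have hsq : circleAverage (fun z => g z * conj (g z)) 0 t =
      (circleAverage (fun z => ‖g z‖ ^ 2) 0 t : ℝ) := by
    simp only [Complex.mul_conj, Complex.normSq_eq_norm_sq, circleAverage_def,
      intervalIntegral.integral_ofReal, Complex.real_smul, smul_eq_mul, Complex.ofReal_mul]
  have hdiag : Function.Injective fun k : ℕ => (k, k) := fun j k h => congrArg Prod.fst h
  rw [← hdiag.hasSum_iff] at hdouble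
  · simpa only [Function.comp_def, circleAverage_const_mul_pow_mul_conj, if_true, hsq,
      Complex.hasSum_ofReal] using hdouble
  · rintro ⟨j, k⟩ hjk
    exact (circleAverage_const_mul_pow_mul_conj j k).trans (if_neg fun h => hjk ⟨j, Prod.ext rfl h⟩)

lemma integral_ball_eq_setIntegral_circleMap (F : ℂ → ℝ) (s : ℝ) :
    ∫ z in ball (0 : ℂ) s, F z =
      ∫ p in Set.Ioo 0 s ×ˢ Set.Ioo (-π) π, p.1 * F (circleMap 0 p.1 p.2) := by
  have hset : Set.Ioo 0 s ×ˢ Set.Ioo (-π) π = polarCoord.target ∩ {p : ℝ × ℝ | p.1 < s} := by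
    ext p
    simp only [polarCoord_target, Set.mem_prod, Set.mem_Ioo, Set.mem_inter_iff, Set.mem_Ioi,
      Set.mem_ofPred_eq]
    tauto
  rw [← integral_indicator measurableSet_ball, ← Complex.integral_comp_polarCoord_symm, hset,
    ← setIntegral_indicator (measurableSet_lt measurable_fst measurable_const)]
  refine setIntegral_congr_fun polarCoord.open_target.measurableSet fun p hp => ?_
  have hp0 : 0 < p.1 := hp.1
  have hmap : Complex.polarCoord.symm p = circleMap 0 p.1 p.2 := by
    rw [Complex.polarCoord_symm_apply, circleMap, Complex.exp_mul_I, zero_add,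
      Complex.ofReal_cos, Complex.ofReal_sin]
  simp only [hmap, smul_eq_mul, Set.indicator, mem_ball_zero_iff, norm_circleMap_zero,
    abs_of_pos hp0, mul_ite, mul_zero, Set.mem_ofPred_eq]

lemma integral_ball_eq_integral_circleAverage {F : ℂ → ℝ} (hs : 0 ≤ s)
    (hF : ContinuousOn F (closedBall 0 s)) :
    ∫ z in ball (0 : ℂ) s, F z = ∫ r in (0)..s, 2 * π * r * circleAverage F 0 r := by
  have hmem : ∀ p ∈ Set.Icc 0 s ×ˢ Set.Icc (-π) π, circleMap 0 p.1 p.2 ∈ closedBall (0 : ℂ) s := by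
    rintro ⟨r, θ⟩ ⟨hr, -⟩
    simpa [abs_of_nonneg hr.1] using hr.2
  have hint : IntegrableOn (fun p : ℝ × ℝ => p.1 * F (circleMap 0 p.1 p.2))
      (Set.Ioo 0 s ×ˢ Set.Ioo (-π) π) (volume.prod volume) := by
    have hcont : Continuous fun p : ℝ × ℝ => circleMap (0 : ℂ) p.1 p.2 := by
      unfold circleMap
      fun_prop
    exact ((continuousOn_fst.mul (hF.comp hcont.continuousOn hmem)).integrableOn_compact
      (isCompact_Icc.prod isCompact_Icc)).mono_set
      (Set.prod_mono Set.Ioo_subset_Icc_self Set.Ioo_subset_Icc_self)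
  have hcircle : ∀ r, ∫ θ in Set.Ioo (-π) π, r * F (circleMap 0 r θ) =
      2 * π * r * circleAverage F 0 r := by
    intro r
    rw [integral_const_mul, ← integral_Ioc_eq_integral_Ioo,
      ← intervalIntegral.integral_of_le (by linarith [Real.pi_pos]),
      Real.circleAverage_eq_integral_add (-π),
      intervalIntegral.integral_comp_add_right fun θ => F (circleMap 0 r θ), smul_eq_mul]
    ring_nf
    field_simp
  rw [integral_ball_eq_setIntegral_circleMap, Measure.volume_eq_prod, setIntegral_prod _ hint,
    intervalIntegral.integral_of_le hs, integral_Ioc_eq_integral_Ioo]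
  exact setIntegral_congr_fun measurableSet_Ioo fun r _ => hcircle r

theorem hasSum_integral_ball_norm_sq (hs : 0 ≤ s) (hg : ContinuousOn g (closedBall 0 s))
    (h : ∀ z ∈ closedBall (0 : ℂ) s, HasSum (fun k => a k * z ^ k) (g z)) :
    HasSum (fun k : ℕ => π * ‖a k‖ ^ 2 * s ^ (2 * k + 2) / (k + 1))
      (∫ z in ball (0 : ℂ) s, ‖g z‖ ^ 2) := by
  have hcircle : ∀ r ∈ Set.Icc 0 s,
      HasSum (fun k => ‖a k‖ ^ 2 * r ^ (2 * k)) (circleAverage (fun z => ‖g z‖ ^ 2) 0 r) :=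
    fun r hr => hasSum_circleAverage_norm_sq fun z hz => h z
      (closedBall_subset_closedBall ((abs_of_nonneg hr.1).trans_le hr.2)
        (sphere_subset_closedBall hz))
  have hterm : ∀ k : ℕ, ∫ r in (0)..s, 2 * π * r * (‖a k‖ ^ 2 * r ^ (2 * k)) =
      π * ‖a k‖ ^ 2 * s ^ (2 * k + 2) / (k + 1) := by
    intro k
    have hmonomial : ∀ r : ℝ, 2 * π * r * (‖a k‖ ^ 2 * r ^ (2 * k)) =
        2 * π * ‖a k‖ ^ 2 * r ^ (2 * k + 1) := fun r => by ring
    simp only [hmonomial, intervalIntegral.integral_const_mul, integral_pow]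
    have : (2 * (k : ℝ) + 1 + 1) ≠ 0 := by positivity
    push_cast
    field_simp
    ring
  rw [integral_ball_eq_integral_circleAverage hs (F := fun z => ‖g z‖ ^ 2) (hg.norm.pow 2)]
  simp only [← hterm]
  refine intervalIntegral.hasSum_integral_of_dominated_convergence
    (fun k _ => 2 * π * s * (‖a k‖ ^ 2 * s ^ (2 * k)))
    (fun k => (Continuous.aestronglyMeasurable (by fun_prop)))
    (fun k => .of_forall fun r hr => ?_)
    (.of_forall fun _ _ => (hcircle s ⟨hs, le_rfl⟩).summable.mul_left _) intervalIntegrable_const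
    (.of_forall fun r hr =>
      (hcircle r (Set.Ioc_subset_Icc_self (Set.uIoc_of_le hs ▸ hr))).mul_left _)
  rw [Set.uIoc_of_le hs] at hr
  have hr0 := hr.1
  rw [Real.norm_of_nonneg (by positivity)]
  gcongr <;> exact hr.2

lemma hasSum_integral_ball_norm_sq_of_deriv (hs : 0 ≤ s) (hg : ContinuousOn g (closedBall 0 s))
    (h : ∀ z ∈ closedBall (0 : ℂ) s, HasSum (fun k => (k + 1) * a (k + 1) * z ^ k) (g z)) :
    HasSum (fun k : ℕ => k * (‖a k‖ ^ 2 * s ^ (2 * k)))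
      (π⁻¹ * ∫ z in ball (0 : ℂ) s, ‖g z‖ ^ 2) := by
  rw [← hasSum_nat_add_iff' 1, Finset.sum_range_one, Nat.cast_zero, zero_mul, sub_zero]
  refine ((hasSum_integral_ball_norm_sq hs hg h).mul_left π⁻¹).congr_fun fun k => ?_
  have hnorm : ‖(k : ℂ) + 1‖ = k + 1 := by exact_mod_cast Complex.norm_natCast (k + 1)
  rw [norm_mul, hnorm]
  push_cast
  field_simp
  ring

lemma exists_hasSum_of_differentiableOn_ball (hf : DifferentiableOn ℂ f (ball 0 R)) :
    ∃ a : ℕ → ℂ, (∀ z ∈ ball (0 : ℂ) R, HasSum (fun k => a k * z ^ k) (f z)) ∧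
      ∀ z ∈ ball (0 : ℂ) R, HasSum (fun k => (k + 1) * a (k + 1) * z ^ k) (deriv f z) := by
  refine ⟨fun k => (k.factorial : ℂ)⁻¹ * iteratedDeriv k f 0, fun z hz => ?_, fun z hz => ?_⟩
  · refine (Complex.hasSum_taylorSeries_on_ball hf hz).congr_fun fun k => ?_
    rw [sub_zero, smul_eq_mul, smul_eq_mul]
    ring
  · refine (Complex.hasSum_taylorSeries_on_ball (hf.deriv isOpen_ball) hz).congr_fun fun k => ?_
    have hk : (k : ℂ) + 1 ≠ 0 := Nat.cast_add_one_ne_zero k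
    beta_reduce
    rw [← iteratedDeriv_succ', sub_zero, smul_eq_mul, smul_eq_mul, Nat.factorial_succ,
      Nat.cast_mul, Nat.cast_succ]
    field_simp

lemma hasSum_le_two_mul_sum_range {y : ℕ → ℝ} {A B : ℝ} (hy : ∀ k, 0 ≤ y k) (hA : HasSum y A)
    (hB : HasSum (fun k => k * y k) B) (hK : 0 < K) (hBA : 2 * B ≤ K * A) :
    A ≤ 2 * ∑ k ∈ Finset.range K, y k := by
  have htail : K * (A - ∑ k ∈ Finset.range K, y k) ≤ B := by
    have hA' := ((hasSum_nat_add_iff' K).2 hA).mul_left (K : ℝ)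
    refine (hasSum_le (fun k => ?_) hA' ((hasSum_nat_add_iff' K).2 hB)).trans
      (sub_le_self B (Finset.sum_nonneg fun k _ => mul_nonneg k.cast_nonneg (hy k)))
    exact mul_le_mul_of_nonneg_right (by exact_mod_cast Nat.le_add_left K k) (hy _)
  have hK' : (0 : ℝ) < K := Nat.cast_pos.2 hK
  refine le_of_mul_le_mul_left ?_ hK'
  linarith

/- Both quantities are sums over the Taylor coefficients of `f`, and in the energy the term of
degree `k` carries an extra factor `k`: the hypothesis says that the mean degree on the circle of
radius `s` is at most `K / 2`, so by Markov's inequality half of the mass sits in degrees below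
`K`. -/
theorem circleAverage_norm_sq_le_of_energy_le (hf : DifferentiableOn ℂ f (ball 0 R)) (hρ : 0 < ρ)
    (hρs : ρ ≤ s) (hsR : s < R) (hK : 0 < K)
    (henergy : 2 * ∫ z in ball (0 : ℂ) s, ‖deriv f z‖ ^ 2 ≤
      π * K * circleAverage (fun z => ‖f z‖ ^ 2) 0 s) :
    circleAverage (fun z => ‖f z‖ ^ 2) 0 s ≤
      2 * ((s / ρ) ^ (2 * K) * circleAverage (fun z => ‖f z‖ ^ 2) 0 ρ) := by
  obtain ⟨a, ha, ha'⟩ := exists_hasSum_of_differentiableOn_ball hf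
  have hs : 0 < s := hρ.trans_le hρs
  have hcircle : ∀ r, 0 < r → r ≤ s →
      HasSum (fun k => ‖a k‖ ^ 2 * r ^ (2 * k)) (circleAverage (fun z => ‖f z‖ ^ 2) 0 r) :=
    fun r hr hrs => hasSum_circleAverage_norm_sq fun z hz => ha z
      (mem_ball_zero_iff.2 (by rw [norm_eq_of_mem_sphere_zero_abs hz, abs_of_pos hr]; linarith))
  have hsub := closedBall_subset_ball (x := (0 : ℂ)) hsR
  have hdisc := hasSum_integral_ball_norm_sq_of_deriv hs.le
    ((hf.deriv isOpen_ball).continuousOn.mono hsub) fun z hz => ha' z (hsub hz)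
  have hpow : ∀ k < K, ‖a k‖ ^ 2 * s ^ (2 * k) ≤
      (s / ρ) ^ (2 * K) * (‖a k‖ ^ 2 * ρ ^ (2 * k)) := by
    intro k hk
    calc ‖a k‖ ^ 2 * s ^ (2 * k) = (s / ρ) ^ (2 * k) * (‖a k‖ ^ 2 * ρ ^ (2 * k)) := by
          rw [div_pow]; field_simp
      _ ≤ (s / ρ) ^ (2 * K) * (‖a k‖ ^ 2 * ρ ^ (2 * k)) := by
          gcongr
          exact (one_le_div hρ).2 hρs
  have hρsum : ∑ k ∈ Finset.range K, ‖a k‖ ^ 2 * ρ ^ (2 * k) ≤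
      circleAverage (fun z => ‖f z‖ ^ 2) 0 ρ :=
    sum_le_hasSum _ (fun k _ => by positivity) (hcircle ρ hρ hρs)
  have hmarkov := hasSum_le_two_mul_sum_range (fun k => by positivity) (hcircle s hs le_rfl) hdisc
    hK (by field_simp; linarith)
  refine hmarkov.trans (mul_le_mul_of_nonneg_left ?_ zero_le_two)
  calc ∑ k ∈ Finset.range K, ‖a k‖ ^ 2 * s ^ (2 * k)
      ≤ ∑ k ∈ Finset.range K, (s / ρ) ^ (2 * K) * (‖a k‖ ^ 2 * ρ ^ (2 * k)) :=
        Finset.sum_le_sum fun k hk => hpow k (Finset.mem_range.1 hk)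
    _ ≤ (s / ρ) ^ (2 * K) * circleAverage (fun z => ‖f z‖ ^ 2) 0 ρ := by
        rw [← Finset.mul_sum]
        gcongr

theorem norm_le_two_mul_sqrt_circleAverage (hf : DifferentiableOn ℂ f (ball 0 R)) (hs : 0 < s)
    (hsR : s < R) {z : ℂ} (hz : ‖z‖ ≤ s / 2) :
    ‖f z‖ ≤ 2 * √(circleAverage (fun z => ‖f z‖ ^ 2) 0 s) := by
  obtain ⟨a, ha, -⟩ := exists_hasSum_of_differentiableOn_ball hf
  have hsum := hasSum_circleAverage_norm_sq (t := s) fun z hz => ha z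
    (mem_ball_zero_iff.2 (by rwa [norm_eq_of_mem_sphere_zero_abs hz, abs_of_pos hs]))
  have hcoeff : ∀ k, ‖a k‖ * s ^ k ≤ √(circleAverage (fun z => ‖f z‖ ^ 2) 0 s) := fun k =>
    Real.le_sqrt_of_sq_le (by
      rw [mul_pow, ← pow_mul, mul_comm k]
      exact le_hasSum hsum k fun j _ => by positivity)
  rw [mul_comm]
  have hfz := ha z (mem_ball_zero_iff.2 (by linarith))
  refine hfz.norm_le_of_bounded (hasSum_geometric_two.mul_left _) fun k => ?_
  calc ‖a k * z ^ k‖ = ‖a k‖ * ‖z‖ ^ k := by rw [norm_mul, norm_pow]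
    _ ≤ ‖a k‖ * (s / 2) ^ k := by gcongr
    _ = ‖a k‖ * s ^ k * (1 / 2) ^ k := by rw [mul_assoc, ← mul_pow]; ring_nf
    _ ≤ √(circleAverage (fun z => ‖f z‖ ^ 2) 0 s) * (1 / 2) ^ k := by gcongr; exact hcoeff k

end PowerSeries

section RealPart

variable {f : ℂ → ℂ} {U : Set ℂ} {R s ρ M : ℝ} {K : ℕ}

lemma circleAverage_norm_sq_le_two_mul_circleAverage_re_sq (hf : DifferentiableOn ℂ f (ball 0 R))
    (hρ : 0 < ρ) (hρR : ρ < R) (hf0 : (f 0).im = 0) :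
    circleAverage (fun z => ‖f z‖ ^ 2) 0 ρ ≤ 2 * circleAverage (fun z => (f z).re ^ 2) 0 ρ := by
  have hcl := closedBall_subset_ball (x := (0 : ℂ)) ((abs_of_pos hρ).trans_lt hρR)
  have hcont : ContinuousOn f (sphere 0 |ρ|) :=
    hf.continuousOn.mono (sphere_subset_closedBall.trans hcl)
  have hmean : circleAverage (fun z => (f z ^ 2).re) 0 ρ = (f 0).re ^ 2 := by
    have hsq : DiffContOnCl ℂ (f ^ 2) (ball 0 |ρ|) :=
      ((hf.pow 2).mono (closure_ball_subset_closedBall.trans hcl)).diffContOnCl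
    refine (Complex.reCLM.circleAverage_comp_comm (hcont.pow 2).circleIntegrable').trans ?_
    rw [hsq.circleAverage, Complex.reCLM_apply, Pi.pow_apply, pow_two, Complex.mul_re, hf0]
    ring
  have hdecomp : circleAverage (fun z => 2 * (f z).re ^ 2) 0 ρ =
      circleAverage (fun z => ‖f z‖ ^ 2) 0 ρ + circleAverage (fun z => (f z ^ 2).re) 0 ρ := by
    refine Eq.trans ?_ (Real.circleAverage_fun_add (hcont.norm.pow 2).circleIntegrable'
      (Complex.continuous_re.comp_continuousOn (hcont.pow 2)).circleIntegrable')
    refine circleAverage_congr_sphere fun z _ => ?_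
    have hnorm : ‖f z‖ ^ 2 = (f z).re * (f z).re + (f z).im * (f z).im := by
      rw [← Complex.normSq_eq_norm_sq, Complex.normSq_apply]
    have hre : (f z ^ 2).re = (f z).re * (f z).re - (f z).im * (f z).im := by
      rw [pow_two, Complex.mul_re]
    linear_combination -hnorm - hre
  have hsmul : circleAverage (fun z => 2 * (f z).re ^ 2) 0 ρ =
      2 * circleAverage (fun z => (f z).re ^ 2) 0 ρ :=
    circleAverage_fun_smul (a := (2 : ℝ))
  nlinarith [sq_nonneg (f 0).re]

theorem norm_le_of_energy_le_of_abs_re_le (hf : DifferentiableOn ℂ f (ball 0 R))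
    (hf0 : (f 0).im = 0) (hρ : 0 < ρ) (hρs : ρ ≤ s) (hsR : s < R) (hK : 0 < K)
    (henergy : 2 * ∫ z in ball (0 : ℂ) s, ‖deriv f z‖ ^ 2 ≤
      π * K * circleAverage (fun z => ‖f z‖ ^ 2) 0 s)
    (hM0 : 0 ≤ M) (hM : ∀ z ∈ sphere (0 : ℂ) ρ, |(f z).re| ≤ M) {z : ℂ} (hz : ‖z‖ ≤ s / 2) :
    ‖f z‖ ≤ 4 * (s / ρ) ^ K * M := by
  have hs : 0 < s := hρ.trans_le hρs
  have hcont : ContinuousOn f (sphere 0 |ρ|) := hf.continuousOn.mono (sphere_subset_closedBall.trans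
    (closedBall_subset_ball ((abs_of_pos hρ).trans_lt (hρs.trans_lt hsR))))
  have hre : circleAverage (fun z => (f z).re ^ 2) 0 ρ ≤ M ^ 2 :=
    Real.circleAverage_mono_on_of_le_circle
      ((Complex.continuous_re.comp_continuousOn hcont).pow 2).circleIntegrable' fun z hz =>
      sq_le_sq.2 ((hM z (abs_of_pos hρ ▸ hz)).trans (le_abs_self M))
  have havg : circleAverage (fun z => ‖f z‖ ^ 2) 0 s ≤ (2 * (s / ρ) ^ K * M) ^ 2 :=
    calc circleAverage (fun z => ‖f z‖ ^ 2) 0 s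
        ≤ 2 * ((s / ρ) ^ (2 * K) * circleAverage (fun z => ‖f z‖ ^ 2) 0 ρ) :=
          circleAverage_norm_sq_le_of_energy_le hf hρ hρs hsR hK henergy
      _ ≤ 2 * ((s / ρ) ^ (2 * K) * (2 * M ^ 2)) := by
          gcongr
          exact (circleAverage_norm_sq_le_two_mul_circleAverage_re_sq hf hρ
            (hρs.trans_lt hsR) hf0).trans (by gcongr)
      _ = (2 * (s / ρ) ^ K * M) ^ 2 := by ring
  calc ‖f z‖ ≤ 2 * √(circleAverage (fun z => ‖f z‖ ^ 2) 0 s) :=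
        norm_le_two_mul_sqrt_circleAverage hf hs hsR hz
    _ ≤ 2 * (2 * (s / ρ) ^ K * M) := by
        gcongr
        exact Real.sqrt_le_iff.2 ⟨by positivity, havg⟩
    _ = 4 * (s / ρ) ^ K * M := by ring

lemma re_le_of_forall_mem_frontier_re_le (hU : Bornology.IsBounded U) (hf : DiffContOnCl ℂ f U)
    {c : ℝ} (h : ∀ z ∈ frontier U, (f z).re ≤ c) {z : ℂ} (hz : z ∈ closure U) : (f z).re ≤ c := by
  have hexp := Complex.norm_le_of_forall_mem_frontier_norm_le (C := Real.exp c) hU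
    (Complex.differentiable_exp.comp_diffContOnCl hf)
    (fun w hw => by
      simpa only [Function.comp_apply, Complex.norm_exp, Real.exp_le_exp] using h w hw) hz
  simpa only [Function.comp_apply, Complex.norm_exp, Real.exp_le_exp] using hexp

lemma re_eq_zero_of_forall_mem_frontier (hU : Bornology.IsBounded U) (hf : DiffContOnCl ℂ f U)
    (h : ∀ z ∈ frontier U, (f z).re = 0) {z : ℂ} (hz : z ∈ closure U) : (f z).re = 0 := by
  refine le_antisymm (re_le_of_forall_mem_frontier_re_le hU hf (fun w hw => (h w hw).le) hz) ?_
  have hneg := re_le_of_forall_mem_frontier_re_le (c := 0) hU hf.neg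
    (fun w hw => by simp only [Pi.neg_apply, Complex.neg_re, h w hw, neg_zero, le_refl]) hz
  simpa only [Pi.neg_apply, Complex.neg_re, neg_nonpos] using hneg

end RealPart

section ZeroCounting

variable {f : ℂ → ℂ} {R s ρ M L : ℝ}

/- Each zero contributes a Blaschke-type factor: dividing `G` by `z - a` gains at least `1 / ρ` at
the centre and at most `1 / (s - ρ)` on the outer circle. -/
theorem pow_card_mul_norm_le {G : ℂ → ℂ} {c : ℂ} (hs : 0 < s) (hρs : ρ < s)
    (hG : DiffContOnCl ℂ G (ball c s)) (hM : ∀ z ∈ sphere c s, ‖G z‖ ≤ M) {Z : Finset ℂ}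
    (hZ : ∀ z ∈ Z, z ∈ closedBall c ρ ∧ G z = 0) :
    (s - ρ) ^ Z.card * ‖G c‖ ≤ ρ ^ Z.card * M := by
  induction Z using Finset.induction generalizing G M with
  | empty =>
    simp only [Finset.card_empty, pow_zero, one_mul]
    refine Complex.norm_le_of_forall_mem_frontier_norm_le isBounded_ball hG ?_
      (subset_closure (mem_ball_self hs))
    rwa [frontier_ball c hs.ne']
  | insert a Z ha ih =>
    obtain ⟨⟨haρ, ha0⟩, hZ⟩ := Finset.forall_mem_insert .. |>.1 hZ
    have haρ' : ‖a - c‖ ≤ ρ := mem_closedBall_iff_norm.1 haρ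
    have has : a ∈ ball c s := closedBall_subset_ball hρs haρ
    have hfac : ∀ z, G z = (z - a) * dslope G a z := fun z => by
      rw [← smul_eq_mul, sub_smul_dslope, ha0, sub_zero]
    have hdslope : DiffContOnCl ℂ (dslope G a) (ball c s) :=
      ⟨(Complex.differentiableOn_dslope (isOpen_ball.mem_nhds has)).2 hG.differentiableOn,
        (continuousOn_dslope (mem_of_superset (isOpen_ball.mem_nhds has) subset_closure)).2
          ⟨hG.continuousOn, hG.differentiableAt isOpen_ball has⟩⟩
    have hbound : ∀ z ∈ sphere c s, ‖dslope G a z‖ ≤ M / (s - ρ) := by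
      intro z hz
      have hdist : s - ρ ≤ ‖z - a‖ := by
        have := norm_sub_le_norm_sub_add_norm_sub z a c
        rw [mem_sphere_iff_norm.1 hz] at this
        linarith
      rw [le_div_iff₀' (sub_pos.2 hρs)]
      calc (s - ρ) * ‖dslope G a z‖ ≤ ‖z - a‖ * ‖dslope G a z‖ := by gcongr
        _ = ‖G z‖ := by rw [hfac, norm_mul]
        _ ≤ M := hM z hz
    have hrest := ih hdslope hbound fun z hz => ⟨(hZ z hz).1, by
      have hza : z - a ≠ 0 := sub_ne_zero.2 fun h => ha (h ▸ hz)
      exact (mul_eq_zero.1 ((hfac z).symm.trans (hZ z hz).2)).resolve_left hza⟩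
    have hρ0 : 0 ≤ ρ := (norm_nonneg _).trans haρ'
    rw [Finset.card_insert_of_notMem ha]
    calc (s - ρ) ^ (Z.card + 1) * ‖G c‖
        = ‖a - c‖ * (s - ρ) * ((s - ρ) ^ Z.card * ‖dslope G a c‖) := by
          rw [hfac c, norm_mul, norm_sub_rev]; ring
      _ ≤ ρ * (s - ρ) * (ρ ^ Z.card * (M / (s - ρ))) := by
          have := sub_pos.2 hρs
          gcongr
      _ = ρ ^ (Z.card + 1) * M := by
          have := (sub_pos.2 hρs).ne'
          field_simp
          ring

/-- The extension to complex angles `ζ` of the function `t ↦ Re f (ρ e^{it})`, namely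
`(f (ρ e^{iζ}) + conj (f (conj (ρ e^{-iζ})))) / 2`, which is holomorphic in `ζ` as long as
`ρ e^{|Im ζ|}` stays within the domain of holomorphy of `f`. -/
noncomputable def complexAngleRe (f : ℂ → ℂ) (ρ : ℝ) (ζ : ℂ) : ℂ :=
  (f (ρ * Complex.exp (ζ * I)) + conj (f (conj (ρ * Complex.exp (-(ζ * I)))))) / 2

lemma complexAngleRe_ofReal (f : ℂ → ℂ) (ρ t : ℝ) :
    complexAngleRe f ρ t = (f (circleMap 0 ρ t)).re := by
  have hconj : conj ((ρ : ℂ) * Complex.exp (-(t * I))) = ρ * Complex.exp (t * I) := by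
    rw [map_mul, Complex.conj_ofReal, ← Complex.exp_conj]
    simp only [map_neg, map_mul, Complex.conj_ofReal, Complex.conj_I, mul_neg, neg_neg]
  rw [complexAngleRe, hconj, circleMap, zero_add, Complex.add_conj]
  push_cast
  ring

lemma norm_mul_exp_mul_I_le (hρ : 0 ≤ ρ) {ζ : ℂ} (hζ : |ζ.im| ≤ L) :
    ‖(ρ : ℂ) * Complex.exp (ζ * I)‖ ≤ ρ * Real.exp L := by
  rw [norm_mul, Complex.norm_exp, Complex.norm_of_nonneg hρ, Complex.mul_I_re]
  gcongr
  exact (neg_le_abs _).trans hζ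

lemma norm_mul_exp_neg_mul_I_le (hρ : 0 ≤ ρ) {ζ : ℂ} (hζ : |ζ.im| ≤ L) :
    ‖(ρ : ℂ) * Complex.exp (-(ζ * I))‖ ≤ ρ * Real.exp L := by
  rw [← neg_mul]
  exact norm_mul_exp_mul_I_le hρ (by rwa [Complex.neg_im, abs_neg])

lemma norm_complexAngleRe_le (hρ : 0 ≤ ρ) (hM : ∀ z, ‖z‖ ≤ ρ * Real.exp L → ‖f z‖ ≤ M) {ζ : ℂ}
    (hζ : |ζ.im| ≤ L) : ‖complexAngleRe f ρ ζ‖ ≤ M := by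
  have hplus := hM _ (norm_mul_exp_mul_I_le hρ hζ)
  have hminus := hM (conj (ρ * Complex.exp (-(ζ * I))))
    ((RCLike.norm_conj _).trans_le (norm_mul_exp_neg_mul_I_le hρ hζ))
  rw [complexAngleRe, norm_div, Complex.norm_two, div_le_iff₀ two_pos]
  refine (norm_add_le _ _).trans ?_
  rw [RCLike.norm_conj]
  linarith

lemma differentiableAt_complexAngleRe (hf : DifferentiableOn ℂ f (ball 0 R)) (hρ : 0 ≤ ρ) {ζ : ℂ}
    (hζ : ρ * Real.exp |ζ.im| < R) : DifferentiableAt ℂ (complexAngleRe f ρ) ζ := by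
  have hfz : ∀ z : ℂ, ‖z‖ ≤ ρ * Real.exp |ζ.im| → DifferentiableAt ℂ f z := fun z hz =>
    hf.differentiableAt (isOpen_ball.mem_nhds (mem_ball_zero_iff.2 (hz.trans_lt hζ)))
  have hplus : DifferentiableAt ℂ (fun w : ℂ => f (ρ * Complex.exp (w * I))) ζ :=
    (hfz _ (norm_mul_exp_mul_I_le hρ le_rfl)).comp (g := f) ζ (by fun_prop)
  have hreflect : DifferentiableAt ℂ (fun w => conj (f (conj w))) (ρ * Complex.exp (-(ζ * I))) := by
    simpa only [Complex.conj_conj, Function.comp_def] using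
      (hfz (conj (ρ * Complex.exp (-(ζ * I))))
        ((RCLike.norm_conj _).trans_le (norm_mul_exp_neg_mul_I_le hρ le_rfl))).conj_conj
  have hminus : DifferentiableAt ℂ (fun w : ℂ => conj (f (conj (ρ * Complex.exp (-(w * I)))))) ζ :=
    hreflect.comp (g := fun w => conj (f (conj w))) ζ (by fun_prop)
  exact (hplus.add hminus).div_const 2

end ZeroCounting

section HolomorphicNodal

variable {f : ℂ → ℂ} {U : Set ℂ} {R s ρ M : ℝ} {K n : ℕ}

lemma two_pow_card_mul_abs_re_le (hf : DifferentiableOn ℂ f (ball 0 R)) (hρ : 0 ≤ ρ)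
    (hρR : ρ * Real.exp (3 * π) < R) (hM : ∀ z, ‖z‖ ≤ ρ * Real.exp (3 * π) → ‖f z‖ ≤ M) {θ : ℝ}
    {Z : Finset ℝ} (hZ : ∀ t ∈ Z, t ∈ Set.Icc (θ - π) (θ + π) ∧ (f (circleMap 0 ρ t)).re = 0) :
    2 ^ Z.card * |(f (circleMap 0 ρ θ)).re| ≤ M := by
  have hπ := Real.pi_pos
  have him : ∀ ζ ∈ closedBall (θ : ℂ) (3 * π), |ζ.im| ≤ 3 * π := fun ζ hζ => by
    simpa only [Complex.sub_im, Complex.ofReal_im, sub_zero] using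
      (Complex.abs_im_le_norm (ζ - θ)).trans (mem_closedBall_iff_norm.1 hζ)
  have hdiff : DiffContOnCl ℂ (complexAngleRe f ρ) (ball (θ : ℂ) (3 * π)) := by
    refine DifferentiableOn.diffContOnCl fun ζ hζ =>
      (differentiableAt_complexAngleRe hf hρ (lt_of_le_of_lt ?_ hρR)).differentiableWithinAt
    have := him ζ (closure_ball_subset_closedBall hζ)
    gcongr
  have hzeros : ∀ ζ ∈ Z.map ⟨((↑) : ℝ → ℂ), Complex.ofReal_injective⟩,
      ζ ∈ closedBall (θ : ℂ) π ∧ complexAngleRe f ρ ζ = 0 := by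
    intro ζ hζ
    obtain ⟨t, ht, rfl⟩ := Finset.mem_map.1 hζ
    obtain ⟨htθ, hft⟩ := hZ t ht
    refine ⟨?_, (complexAngleRe_ofReal f ρ t).trans (by rw [hft, Complex.ofReal_zero])⟩
    rw [← Real.closedBall_eq_Icc, mem_closedBall_iff_norm] at htθ
    rwa [mem_closedBall_iff_norm, Function.Embedding.coeFn_mk, ← Complex.ofReal_sub,
      Complex.norm_real]
  have hcount := pow_card_mul_norm_le (by positivity) (by linarith) hdiff
    (fun ζ hζ => norm_complexAngleRe_le hρ hM (him ζ (sphere_subset_closedBall hζ))) hzeros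
  rw [Finset.card_map, complexAngleRe_ofReal, Complex.norm_real, Real.norm_eq_abs,
    show 3 * π - π = 2 * π by ring, mul_pow] at hcount
  refine le_of_mul_le_mul_left ?_ (pow_pos hπ Z.card)
  linarith

lemma exists_mem_frontier_re_ne_zero_mem_closure (hU : IsOpen U) (hUb : Bornology.IsBounded U)
    (hf : DiffContOnCl ℂ f U) {x : ℂ} (hx : x ∈ U ∩ {z | (f z).re ≠ 0}) :
    ∃ p ∈ frontier U, (f p).re ≠ 0 ∧
      p ∈ closure (connectedComponentIn (U ∩ {z | (f z).re ≠ 0}) x) := by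
  set C := connectedComponentIn (U ∩ {z | (f z).re ≠ 0}) x
  have hCU : C ⊆ U := (connectedComponentIn_subset _ _).trans Set.inter_subset_left
  have hS : IsOpen (U ∩ {z | (f z).re ≠ 0}) :=
    (Complex.continuous_re.comp_continuousOn hf.differentiableOn.continuousOn).isOpen_inter_preimage
      hU isOpen_compl_singleton
  by_contra! hzero
  refine hx.2 (re_eq_zero_of_forall_mem_frontier (hUb.subset hCU) (hf.mono hCU) (fun p hp => ?_)
    (subset_closure (mem_connectedComponentIn hx)))
  by_contra hp0
  have hpC : p ∉ C := by
    rw [frontier, hS.connectedComponentIn.interior_eq] at hp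
    exact hp.2
  have hpU : p ∉ U := fun hpU =>
    hpC (closure_connectedComponentIn_inter_subset ⟨frontier_subset_closure hp, hpU, hp0⟩)
  refine hzero p ?_ hp0 (frontier_subset_closure hp)
  rw [frontier, hU.interior_eq]
  exact ⟨closure_mono hCU (frontier_subset_closure hp), hpU⟩

/- The zeros of `Re f` cut the circle of radius `ρ` into arcs. By the maximum principle the
closure of every nodal domain in the disc contains a point of one of these arcs, hence the
whole arc. -/
theorem nodalComponents_re_finite_and_ncard_le_card_zeros (hf : DifferentiableOn ℂ f (ball 0 R))
    (hρ : 0 < ρ) (hρR : ρ < R) {θ : ℝ} {Z : Finset ℝ}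
    (hZ : ∀ t, t ∈ Z ↔ t ∈ Set.Icc (θ - π) (θ + π) ∧ (f (circleMap 0 ρ t)).re = 0) :
    (nodalComponents (ball 0 ρ ∩ {z | (f z).re ≠ 0})).Finite ∧
      (nodalComponents (ball 0 ρ ∩ {z | (f z).re ≠ 0})).ncard ≤ Z.card + 1 := by
  have hcl : closedBall (0 : ℂ) ρ ⊆ ball 0 R := closedBall_subset_ball hρR
  have hcircle := fun t => circleMap_mem_closedBall (0 : ℂ) hρ.le t
  have hV : ball 0 ρ ∩ {z | (f z).re ≠ 0} = ball (0 : ℂ) ρ ∩ (ball 0 R ∩ {z | (f z).re ≠ 0}) := by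
    rw [← Set.inter_assoc, Set.inter_eq_left.2 (ball_subset_closedBall.trans hcl)]
  have hVopen : IsOpen (ball 0 R ∩ {z | (f z).re ≠ 0}) :=
    (Complex.continuous_re.comp_continuousOn hf.continuousOn).isOpen_inter_preimage isOpen_ball
      isOpen_compl_singleton
  have hnotMem : ∀ t, circleMap 0 ρ t ∉ ball 0 R ∩ {z | (f z).re ≠ 0} ↔
      (f (circleMap 0 ρ t)).re = 0 := fun t => by
    simp only [Set.mem_inter_iff, hcl (hcircle t), Set.mem_ofPred_eq, true_and, not_not]
  rw [hV]
  refine nodalComponents_finite_and_ncard_le_of_path (convex_ball 0 ρ) hVopen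
    (continuous_circleMap 0 ρ).continuousOn (fun t _ => closure_ball (0 : ℂ) hρ.ne' ▸ hcircle t)
    (fun t ht => (hZ t).trans ((and_iff_right ht).trans (hnotMem t).symm)) fun x hx => ?_
  rw [← hV] at hx ⊢
  obtain ⟨p, hp, hp0, hpC⟩ := exists_mem_frontier_re_ne_zero_mem_closure isOpen_ball
    isBounded_ball (hf.mono (closure_ball_subset_closedBall.trans hcl)).diffContOnCl hx
  rw [frontier_ball _ hρ.ne'] at hp
  obtain ⟨t, rfl⟩ : p ∈ Set.range (circleMap 0 ρ) := by rwa [range_circleMap, abs_of_pos hρ]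
  obtain ⟨y, hy, hty⟩ := (periodic_circleMap 0 ρ).exists_mem_Ioc Real.two_pi_pos t (θ - π)
  rw [hty] at hp0 hpC
  exact ⟨y, ⟨hy.1.le, hy.2.trans (by linarith)⟩, ⟨hcl (hcircle y), hp0⟩, hpC⟩

lemma exists_finset_zeros_card_lt (hf : DifferentiableOn ℂ f (ball 0 R)) (hf0 : (f 0).im = 0)
    (hρ : 0 < ρ) (hρs : 2 * Real.exp (3 * π) * ρ ≤ s) (hsR : s < R) (hK : 0 < K)
    (henergy : 2 * ∫ z in ball (0 : ℂ) s, ‖deriv f z‖ ^ 2 ≤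
      π * K * circleAverage (fun z => ‖f z‖ ^ 2) 0 s)
    (hn : 4 * (s / ρ) ^ K < 2 ^ n) {θ : ℝ} (hθ : (f (circleMap 0 ρ θ)).re ≠ 0)
    (hmax : ∀ z ∈ sphere (0 : ℂ) ρ, |(f z).re| ≤ |(f (circleMap 0 ρ θ)).re|) :
    ∃ Z : Finset ℝ, Z.card < n ∧
      ∀ t, t ∈ Z ↔ t ∈ Set.Icc (θ - π) (θ + π) ∧ (f (circleMap 0 ρ t)).re = 0 := by
  have hexp := Real.one_le_exp (x := 3 * π) (by positivity)
  have hcard : ∀ Z : Finset ℝ, (∀ t ∈ Z, t ∈ Set.Icc (θ - π) (θ + π) ∧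
      (f (circleMap 0 ρ t)).re = 0) → Z.card < n := by
    intro Z hZ
    have hgrowth := two_pow_card_mul_abs_re_le hf hρ.le (by nlinarith)
      (fun z hz => norm_le_of_energy_le_of_abs_re_le hf hf0 hρ (by nlinarith) hsR hK henergy
        (abs_nonneg _) hmax (by linarith)) hZ
    exact (pow_lt_pow_iff_right₀ one_lt_two).1
      ((le_of_mul_le_mul_right hgrowth (abs_pos.2 hθ)).trans_lt hn)
  have hfin : {t | t ∈ Set.Icc (θ - π) (θ + π) ∧ (f (circleMap 0 ρ t)).re = 0}.Finite := by
    by_contra hinf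
    obtain ⟨Z, hZ, hZn⟩ := Set.Infinite.exists_subset_card_eq hinf n
    exact (hcard Z hZ).ne hZn
  have hmem : ∀ t, t ∈ hfin.toFinset ↔ t ∈ Set.Icc (θ - π) (θ + π) ∧
      (f (circleMap 0 ρ t)).re = 0 := fun t => hfin.mem_toFinset
  exact ⟨hfin.toFinset, hcard _ fun t => (hmem t).1, hmem⟩

theorem nodalComponents_re_finite_and_ncard_le (hf : DifferentiableOn ℂ f (ball 0 R))
    (hf0 : (f 0).im = 0) (hρ : 0 < ρ) (hρs : 2 * Real.exp (3 * π) * ρ ≤ s) (hsR : s < R)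
    (hK : 0 < K)
    (henergy : 2 * ∫ z in ball (0 : ℂ) s, ‖deriv f z‖ ^ 2 ≤
      π * K * circleAverage (fun z => ‖f z‖ ^ 2) 0 s)
    (hn : 4 * (s / ρ) ^ K < 2 ^ n) {x : ℂ} (hx : x ∈ ball 0 ρ ∩ {z | (f z).re ≠ 0}) :
    (nodalComponents (ball 0 ρ ∩ {z | (f z).re ≠ 0})).Finite ∧
      (nodalComponents (ball 0 ρ ∩ {z | (f z).re ≠ 0})).ncard ≤ n := by
  have hρR : ρ < R := by
    have := Real.one_le_exp (x := 3 * π) (by positivity)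
    nlinarith
  have hcl : closedBall (0 : ℂ) ρ ⊆ ball 0 R := closedBall_subset_ball hρR
  have hre : ContinuousOn (fun z => (f z).re) (ball 0 R) :=
    Complex.continuous_re.comp_continuousOn hf.continuousOn
  obtain ⟨p, hp, hp0, -⟩ := exists_mem_frontier_re_ne_zero_mem_closure isOpen_ball isBounded_ball
    (hf.mono (closure_ball_subset_closedBall.trans hcl)).diffContOnCl hx
  rw [frontier_ball _ hρ.ne'] at hp
  obtain ⟨q, hq, hqmax⟩ := (isCompact_sphere (0 : ℂ) ρ).exists_isMaxOn ⟨p, hp⟩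
    (hre.mono (sphere_subset_closedBall.trans hcl)).abs
  obtain ⟨θ, rfl⟩ : q ∈ Set.range (circleMap 0 ρ) := by rwa [range_circleMap, abs_of_pos hρ]
  obtain ⟨Z, hZn, hZ⟩ := exists_finset_zeros_card_lt hf hf0 hρ hρs hsR hK henergy hn
    (abs_pos.1 ((abs_pos.2 hp0).trans_le (hqmax hp))) hqmax
  exact (nodalComponents_re_finite_and_ncard_le_card_zeros hf hρ hρR hZ).imp_right
    fun h => h.trans hZn

end HolomorphicNodal

section Circle

variable {F : ℂ → ℝ} {p : ℂ} {s : ℝ}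

lemma edist_le_hausdorffMeasure {X : Type*} [MetricSpace X] [MeasurableSpace X] [BorelSpace X]
    {A : Set X} (hA : IsPreconnected A) {x y : X} (hx : x ∈ A) (hy : y ∈ A) :
    edist x y ≤ μH[1] A := by
  have hlip : LipschitzWith 1 fun z => dist z x := LipschitzWith.dist_left x
  have hIcc : Set.Icc 0 (dist y x) ⊆ (fun z => dist z x) '' A :=
    (hA.image _ hlip.continuous.continuousOn).Icc_subset ⟨x, hx, dist_self x⟩ ⟨y, hy, rfl⟩
  calc edist x y = volume (Set.Icc 0 (dist y x)) := by
        rw [Real.volume_Icc, sub_zero, dist_comm, edist_dist]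
    _ ≤ volume ((fun z => dist z x) '' A) := measure_mono hIcc
    _ ≤ μH[1] A := by
        simpa only [hausdorffMeasure_real, ENNReal.coe_one, ENNReal.rpow_one, one_mul] using
          hlip.hausdorffMeasure_image_le zero_le_one A

lemma hausdorffMeasure_restrict_sphere_le (hs : 0 ≤ s) :
    (μH[1] : Measure ℂ).restrict (sphere 0 s) ≤
      s.toNNReal • (volume.restrict (Set.Ioc 0 (2 * π))).map (circleMap 0 s) := by
  have hmeas : Measurable (circleMap 0 s) := (continuous_circleMap 0 s).measurable
  refine Measure.le_iff.2 fun A hA => ?_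
  rw [Measure.restrict_apply hA, Measure.smul_apply, Measure.map_apply hmeas hA,
    Measure.restrict_apply (hmeas hA), ← abs_of_nonneg hs, ← image_circleMap_Ioc, abs_of_nonneg hs,
    ← Set.image_preimage_inter]
  simpa only [hausdorffMeasure_real, Real.nnabs_of_nonneg hs, ENNReal.rpow_one, ENNReal.smul_def,
    smul_eq_mul] using
    (lipschitzWith_circleMap 0 s).hausdorffMeasure_image_le zero_le_one
      (circleMap 0 s ⁻¹' A ∩ Set.Ioc 0 (2 * π))

lemma restrict_map_circleMap_sphere (hs : 0 ≤ s) (μ : Measure ℝ) :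
    (μ.map (circleMap 0 s)).restrict (sphere 0 s) = μ.map (circleMap 0 s) := by
  have hpre : circleMap 0 s ⁻¹' sphere 0 s = Set.univ :=
    Set.eq_univ_of_forall fun t => circleMap_mem_sphere 0 hs t
  rw [Measure.restrict_map (continuous_circleMap 0 s).measurable isClosed_sphere.measurableSet,
    hpre, Measure.restrict_univ]

lemma integrable_map_circleMap (hs : 0 ≤ s) (hF : ContinuousOn F (sphere 0 s)) :
    Integrable F ((volume.restrict (Set.Ioc 0 (2 * π))).map (circleMap 0 s)) := by
  rw [← restrict_map_circleMap_sphere hs]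
  exact hF.integrableOn_compact (isCompact_sphere 0 s)

lemma integrableOn_sphere_hausdorffMeasure (hs : 0 ≤ s) (hF : ContinuousOn F (sphere 0 s)) :
    IntegrableOn F (sphere 0 s) μH[1] :=
  (integrable_map_circleMap hs hF).smul_measure_nnreal.mono_measure
    (hausdorffMeasure_restrict_sphere_le hs)

lemma setIntegral_sphere_le_circleAverage (hs : 0 ≤ s) (hF : ContinuousOn F (sphere 0 s))
    (hF0 : ∀ z, 0 ≤ F z) : ∫ z in sphere 0 s, F z ∂μH[1] ≤ 2 * π * s * circleAverage F 0 s := by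
  have hint := integrable_map_circleMap hs hF
  calc ∫ z in sphere 0 s, F z ∂μH[1]
      ≤ ∫ z, F z ∂(s.toNNReal • (volume.restrict (Set.Ioc 0 (2 * π))).map (circleMap 0 s)) :=
        integral_mono_measure (hausdorffMeasure_restrict_sphere_le hs) (Eventually.of_forall hF0)
          hint.smul_measure_nnreal
    _ = s * ∫ θ in Set.Ioc 0 (2 * π), F (circleMap 0 s θ) := by
        rw [integral_smul_nnreal_measure, integral_map
          (continuous_circleMap 0 s).measurable.aemeasurable hint.aestronglyMeasurable,
          NNReal.smul_def, Real.coe_toNNReal _ hs, smul_eq_mul]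
    _ = 2 * π * s * circleAverage F 0 s := by
        rw [circleAverage_def, intervalIntegral.integral_of_le Real.two_pi_pos.le, smul_eq_mul]
        field_simp

lemma hausdorffMeasure_circleMap_image_Icc_pos (hs : 0 < s) {a b : ℝ} (hab : a < b) :
    0 < μH[1] (circleMap 0 s '' Set.Icc a b) := by
  obtain ⟨c, hac, hcb⟩ := exists_between (lt_min hab (lt_add_of_pos_right a Real.two_pi_pos))
  rw [lt_min_iff] at hcb
  have hne : circleMap 0 s a ≠ circleMap 0 s c := fun h =>
    hac.ne (eq_of_circleMap_eq hs.ne' (by rw [abs_sub_comm, abs_of_pos] <;> linarith) h)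
  refine (edist_pos.2 hne).trans_le (edist_le_hausdorffMeasure
    (isPreconnected_Icc.image _ (continuous_circleMap 0 s).continuousOn)
    (Set.mem_image_of_mem _ ⟨le_rfl, hab.le⟩) (Set.mem_image_of_mem _ ⟨hac.le, hcb.1.le⟩))

lemma setIntegral_sphere_pos (hs : 0 < s) (hF : ContinuousOn F (sphere 0 s))
    (hF0 : ∀ z, 0 ≤ F z) (hp : p ∈ sphere 0 s) (hFp : F p ≠ 0) :
    0 < ∫ z in sphere 0 s, F z ∂μH[1] := by
  obtain ⟨θ, rfl⟩ : p ∈ Set.range (circleMap 0 s) := by rwa [range_circleMap, abs_of_pos hs]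
  have hmem : ∀ t, circleMap 0 s t ∈ sphere 0 s := circleMap_mem_sphere 0 hs.le
  have hnear : ∀ᶠ t in 𝓝 θ, F (circleMap 0 s t) ≠ 0 :=
    (hF.comp_continuous (continuous_circleMap 0 s) hmem).continuousAt.eventually_ne hFp
  obtain ⟨b, hb, hsub⟩ := mem_nhdsGE_iff_exists_Icc_subset.1 (mem_nhdsWithin_of_mem_nhds hnear)
  rw [setIntegral_pos_iff_support_of_nonneg_ae (Eventually.of_forall hF0)
    (integrableOn_sphere_hausdorffMeasure hs.le hF)]
  refine (hausdorffMeasure_circleMap_image_Icc_pos hs hb).trans_le (measure_mono ?_)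
  rintro _ ⟨t, ht, rfl⟩
  exact ⟨hsub ht, hmem t⟩

end Circle

section Transfer

open scoped Laplacian

variable {E F : Type*} [NormedAddCommGroup E] [InnerProductSpace ℝ E] [NormedAddCommGroup F]
  [InnerProductSpace ℝ F]

lemma laplacian_eq_lapl {n : ℕ} {u : EuclideanSpace ℝ (Fin n) → ℝ} {x : EuclideanSpace ℝ (Fin n)}
    (hu : ContDiffAt ℝ 2 u x) : Δ u x = lapl u x := by
  have hd : DifferentiableAt ℝ (fderiv ℝ u) x :=
    (hu.fderiv_right (m := 1) (by norm_num)).differentiableAt one_ne_zero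
  rw [InnerProductSpace.laplacian_eq_iteratedFDeriv_orthonormalBasis u
    (EuclideanSpace.basisFun (Fin n) ℝ)]
  refine Finset.sum_congr rfl fun i _ => ?_
  rw [iteratedFDeriv_two_apply, fderiv_clm_apply hd (differentiableAt_const _)]
  simp

lemma laplacian_comp_linearIsometryEquiv [FiniteDimensional ℝ E] [FiniteDimensional ℝ F]
    (e : E ≃ₗᵢ[ℝ] F) (u : F → ℝ) (x : E) : Δ (u ∘ e) x = Δ u (e x) := by
  have hcomp : iteratedFDeriv ℝ 2 (u ∘ e) x =
      (iteratedFDeriv ℝ 2 u (e x)).compContinuousLinearMap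
        fun _ => (e.toContinuousLinearEquiv : E →L[ℝ] F) := by
    simpa only [Set.preimage_univ, iteratedFDerivWithin_univ, LinearIsometryEquiv.coe_coe] using
      e.toContinuousLinearEquiv.iteratedFDerivWithin_comp_right u uniqueDiffOn_univ
        (Set.mem_univ (e x)) 2
  rw [InnerProductSpace.laplacian_eq_iteratedFDeriv_orthonormalBasis _ (stdOrthonormalBasis ℝ E),
    InnerProductSpace.laplacian_eq_iteratedFDeriv_orthonormalBasis _
      ((stdOrthonormalBasis ℝ E).map e)]
  dsimp only
  rw [hcomp]
  refine Finset.sum_congr rfl fun i _ => ?_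
  rw [ContinuousMultilinearMap.compContinuousLinearMap_apply]
  congr 1
  ext j
  fin_cases j <;> simp

lemma norm_gradient_comp_linearIsometryEquiv [CompleteSpace E] [CompleteSpace F] (e : E ≃ₗᵢ[ℝ] F)
    (u : F → ℝ) (x : E) : ‖gradient (u ∘ e) x‖ = ‖gradient u (e x)‖ := by
  have hcomp : fderiv ℝ (u ∘ e) x = fderiv ℝ u (e x) ∘SL (e.toContinuousLinearEquiv : E →L[ℝ] F) :=
    e.toContinuousLinearEquiv.comp_right_fderiv
  simp only [gradient, LinearIsometryEquiv.norm_map, hcomp]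
  exact ContinuousLinearMap.opNorm_comp_linearIsometryEquiv _ e

lemma gradient_re_eq_conj_deriv {f : ℂ → ℂ} {z : ℂ} (hf : DifferentiableAt ℂ f z) :
    gradient (fun w => (f w).re) z = conj (deriv f z) := by
  refine HasGradientAt.gradient (hasGradientAt_iff_hasFDerivAt.2 ?_)
  have hre := Complex.reCLM.hasFDerivAt.comp z (hf.hasDerivAt.hasFDerivAt.restrictScalars ℝ)
  refine hre.congr_fderiv (ContinuousLinearMap.ext fun w => ?_)
  simp [Complex.inner]

/-- The standard identification of `ℂ` with the Euclidean plane `ℝ²`. -/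
noncomputable abbrev complexPlane : ℂ ≃ₗᵢ[ℝ] EuclideanSpace ℝ (Fin 2) :=
  Complex.orthonormalBasisOneI.repr

lemma HarmonicFnOn.harmonicOnNhd_comp_linearIsometryEquiv [FiniteDimensional ℝ E] {n : ℕ}
    {u : EuclideanSpace ℝ (Fin n) → ℝ} {Ω : Set (EuclideanSpace ℝ (Fin n))} (hu : HarmonicFnOn u Ω)
    (hΩ : IsOpen Ω) (e : E ≃ₗᵢ[ℝ] EuclideanSpace ℝ (Fin n)) :
    InnerProductSpace.HarmonicOnNhd (u ∘ e) (e ⁻¹' Ω) := by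
  have hcd : ∀ x ∈ Ω, ContDiffAt ℝ 2 u x := fun x hx => hu.1.contDiffAt (hΩ.mem_nhds hx)
  refine fun z hz => ⟨(hcd (e z) hz).comp z e.contDiff.contDiffAt, ?_⟩
  filter_upwards [(hΩ.preimage e.continuous).mem_nhds hz] with w hw
  rw [laplacian_comp_linearIsometryEquiv, laplacian_eq_lapl (hcd _ hw), hu.2 _ hw, Pi.zero_apply]

lemma HarmonicFnOn.exists_differentiableOn_re_eq {R : ℝ} {u : EuclideanSpace ℝ (Fin 2) → ℝ}
    (hu : HarmonicFnOn u (ball 0 R)) :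
    ∃ f : ℂ → ℂ, DifferentiableOn ℂ f (ball 0 R) ∧ (f 0).im = 0 ∧
      ∀ z ∈ ball (0 : ℂ) R, u (complexPlane z) = (f z).re := by
  have hharm := hu.harmonicOnNhd_comp_linearIsometryEquiv isOpen_ball complexPlane
  rw [LinearIsometryEquiv.preimage_ball, map_zero] at hharm
  obtain ⟨F, hF, hFu⟩ := hharm.exists_analyticOnNhd_ball_re_eq
  refine ⟨fun z => F z - (F 0).im * I, hF.differentiableOn.sub_const _, by simp, fun z hz => ?_⟩
  simpa using (hFu hz).symm

lemma DInt_eq_integral_norm_deriv {f : ℂ → ℂ} {s : ℝ} {u : EuclideanSpace ℝ (Fin 2) → ℝ}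
    (hf : DifferentiableOn ℂ f (ball 0 s))
    (hfu : ∀ z ∈ ball (0 : ℂ) s, u (complexPlane z) = (f z).re) :
    DInt u 0 s = ∫ z in ball (0 : ℂ) s, ‖deriv f z‖ ^ 2 := by
  rw [DInt, ← complexPlane.measurePreserving.setIntegral_preimage_emb
    complexPlane.toHomeomorph.measurableEmbedding, LinearIsometryEquiv.preimage_ball, map_zero]
  refine setIntegral_congr_fun measurableSet_ball fun z hz => ?_
  have hz' := isOpen_ball.mem_nhds hz
  have hgrad : gradient (u ∘ complexPlane) z = gradient (fun w => (f w).re) z := by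
    have heq : u ∘ complexPlane =ᶠ[𝓝 z] fun w => (f w).re := eventually_of_mem hz' hfu
    rw [gradient, gradient, heq.fderiv_eq]
  rw [← norm_gradient_comp_linearIsometryEquiv, hgrad,
    gradient_re_eq_conj_deriv (hf.differentiableAt hz'), RCLike.norm_conj]

lemma HInt_eq_integral_sphere (u : EuclideanSpace ℝ (Fin 2) → ℝ) (s : ℝ) :
    HInt u 0 s = ∫ z in sphere (0 : ℂ) s, u (complexPlane z) ^ 2 ∂μH[1] := by
  have hdim : ((2 : ℕ) : ℝ) - 1 = 1 := by norm_num
  rw [HInt, hdim,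
    ← (complexPlane.toIsometryEquiv.measurePreserving_hausdorffMeasure 1).setIntegral_preimage_emb
      complexPlane.toHomeomorph.measurableEmbedding]
  rw [LinearIsometryEquiv.coe_toIsometryEquiv, LinearIsometryEquiv.preimage_sphere, map_zero]

lemma integral_norm_deriv_le_of_freqN_le {f : ℂ → ℂ} {R s N : ℝ} {u : EuclideanSpace ℝ (Fin 2) → ℝ}
    {p : ℂ} (hf : DifferentiableOn ℂ f (ball 0 R))
    (hfu : ∀ z ∈ ball (0 : ℂ) R, u (complexPlane z) = (f z).re) (hs : 0 < s) (hsR : s < R)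
    (hN : 0 ≤ N) (hfreq : freqN u 0 s ≤ N) (hp : p ∈ sphere 0 s) (hp0 : (f p).re ≠ 0) :
    ∫ z in ball (0 : ℂ) s, ‖deriv f z‖ ^ 2 ≤
      2 * π * N * circleAverage (fun z => ‖f z‖ ^ 2) 0 s := by
  have hsphere : sphere (0 : ℂ) s ⊆ ball 0 R := sphere_subset_ball hsR
  have hcont : ContinuousOn f (sphere 0 s) := hf.continuousOn.mono hsphere
  have hre : ContinuousOn (fun z => (f z).re ^ 2) (sphere 0 s) :=
    (Complex.continuous_re.comp_continuousOn hcont).pow 2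
  have hH : HInt u 0 s = ∫ z in sphere (0 : ℂ) s, (f z).re ^ 2 ∂μH[1] := by
    rw [HInt_eq_integral_sphere]
    exact setIntegral_congr_fun isClosed_sphere.measurableSet fun z hz => by
      simp only [hfu z (hsphere hz)]
  have hHpos : 0 < HInt u 0 s :=
    hH ▸ setIntegral_sphere_pos hs hre (fun z => sq_nonneg _) hp (pow_ne_zero 2 hp0)
  have hHle : HInt u 0 s ≤ 2 * π * s * circleAverage (fun z => (f z).re ^ 2) 0 s :=
    hH ▸ setIntegral_sphere_le_circleAverage hs.le hre fun z => sq_nonneg _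
  have havg : circleAverage (fun z => (f z).re ^ 2) 0 s ≤ circleAverage (fun z => ‖f z‖ ^ 2) 0 s :=
    Real.circleAverage_mono (hre.circleIntegrable hs.le) ((hcont.norm.pow 2).circleIntegrable hs.le)
      fun z _ => sq_le_sq.2 ((Complex.abs_re_le_norm _).trans (le_abs_self _))
  rw [freqN, div_le_iff₀ hHpos, DInt_eq_integral_norm_deriv (hf.mono (ball_subset_ball hsR.le))
    fun z hz => hfu z (ball_subset_ball hsR.le hz)] at hfreq
  refine le_of_mul_le_mul_left ?_ hs
  calc s * ∫ z in ball (0 : ℂ) s, ‖deriv f z‖ ^ 2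
      ≤ N * (2 * π * s * circleAverage (fun z => (f z).re ^ 2) 0 s) := by
        exact hfreq.trans (by gcongr)
    _ ≤ N * (2 * π * s * circleAverage (fun z => ‖f z‖ ^ 2) 0 s) := by gcongr
    _ = s * (2 * π * N * circleAverage (fun z => ‖f z‖ ^ 2) 0 s) := by ring

theorem nodalComponents_finite_and_ncard_le_of_freqN_le {R s ρ : ℝ} {K n : ℕ}
    {u : EuclideanSpace ℝ (Fin 2) → ℝ} (hu : HarmonicFnOn u (ball 0 R)) (hρ : 0 < ρ)
    (hρs : 2 * Real.exp (3 * π) * ρ ≤ s) (hsR : s < R) (hK : 0 < K)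
    (hfreq : freqN u 0 s ≤ K / 4) (hn : 4 * (s / ρ) ^ K < 2 ^ n) :
    (nodalComponents {x | x ∈ ball 0 ρ ∧ u x ≠ 0}).Finite ∧
      (nodalComponents {x | x ∈ ball 0 ρ ∧ u x ≠ 0}).ncard ≤ n := by
  obtain ⟨f, hf, hf0, hfu⟩ := hu.exists_differentiableOn_re_eq
  have hs : 0 < s := hρs.trans_lt' (by positivity)
  have hρ_le : ρ ≤ s := by
    have := Real.one_le_exp (x := 3 * π) (by positivity)
    nlinarith
  have hset : {x | x ∈ ball 0 ρ ∧ u x ≠ 0} =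
      complexPlane.toHomeomorph '' (ball 0 ρ ∩ {z | (f z).re ≠ 0}) := by
    ext x
    obtain ⟨z, rfl⟩ := complexPlane.toHomeomorph.surjective x
    rw [complexPlane.toHomeomorph.injective.mem_set_image]
    change complexPlane z ∈ ball 0 ρ ∧ u (complexPlane z) ≠ 0 ↔ z ∈ ball 0 ρ ∧ (f z).re ≠ 0
    rw [mem_ball_zero_iff, LinearIsometryEquiv.norm_map, ← mem_ball_zero_iff]
    exact and_congr_right fun hz => by rw [hfu z (ball_subset_ball (hρ_le.trans hsR.le) hz)]
  rw [hset, nodalComponents_image, Set.ncard_image_of_injective _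
    complexPlane.toHomeomorph.injective.image_injective]
  suffices h : (nodalComponents (ball 0 ρ ∩ {z | (f z).re ≠ 0})).Finite ∧
      (nodalComponents (ball 0 ρ ∩ {z | (f z).re ≠ 0})).ncard ≤ n from h.imp_left (·.image _)
  obtain hempty | ⟨x, hx⟩ := (ball 0 ρ ∩ {z | (f z).re ≠ 0}).eq_empty_or_nonempty
  · simp only [hempty, nodalComponents, Set.mem_empty_iff_false, false_and, exists_false,
      Set.ofPred_false, Set.finite_empty, Set.ncard_empty, Nat.zero_le, and_self]
  obtain ⟨p, hp, hp0, -⟩ := exists_mem_frontier_re_ne_zero_mem_closure isOpen_ball isBounded_ball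
    (hf.mono (closure_ball_subset_closedBall.trans (closedBall_subset_ball hsR))).diffContOnCl
    (Set.inter_subset_inter_left _ (ball_subset_ball hρ_le) hx)
  rw [frontier_ball _ hs.ne'] at hp
  refine nodalComponents_re_finite_and_ncard_le hf hf0 hρ hρs hsR hK ?_ hn hx
  linarith [integral_norm_deriv_le_of_freqN_le hf hfu hs hsR (by positivity) hfreq hp hp0]

theorem S_subset_T_general (N₀ : ℝ) :
    ∃ θ₀ ∈ Set.Ioo (0 : ℝ) (1 / 2), ∃ k₀ : ℕ, 1 ≤ k₀ ∧
      ∀ (u : EuclideanSpace ℝ (Fin 2) → ℝ) (R s : ℝ), HarmonicFnOn u (ball 0 R) →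
        0 < s → s < R → freqN u 0 s ≤ N₀ →
          (nodalComponents {x | x ∈ ball 0 (θ₀ * s) ∧ u x ≠ 0}).Finite ∧
            (nodalComponents {x | x ∈ ball 0 (θ₀ * s) ∧ u x ≠ 0}).ncard ≤ k₀ := by
  have hl : 2 < 2 * Real.exp (3 * π) := by
    linarith [Real.one_lt_exp_iff.2 (show 0 < 3 * π by positivity)]
  obtain ⟨n, hn⟩ := pow_unbounded_of_one_lt
    (4 * (2 * Real.exp (3 * π)) ^ (⌈4 * N₀⌉₊ + 1)) one_lt_two
  refine ⟨(2 * Real.exp (3 * π))⁻¹, ⟨by positivity, ?_⟩, n + 1, n.succ_pos,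
    fun u R s hu hs hsR hfreq => ?_⟩
  · rw [one_div]
    exact inv_strictAnti₀ two_pos hl
  refine (nodalComponents_finite_and_ncard_le_of_freqN_le (K := ⌈4 * N₀⌉₊ + 1) hu (by positivity)
    (by rw [mul_inv_cancel_left₀ (by positivity)]) hsR (Nat.succ_pos _)
    (hfreq.trans ?_) ?_).imp_right (Nat.le_succ_of_le ·)
  · push_cast
    linarith [Nat.le_ceil (4 * N₀)]
  · rwa [show s / ((2 * Real.exp (3 * π))⁻¹ * s) = 2 * Real.exp (3 * π) by field_simp]

end Transfer

/-- **Proposition 2.7** (𝒮_{N₀} ⊆ 𝒯_{k₀}, case A = Identity): given `N₀ > 0` there are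
`θ₀ ∈ (0,1/2)` and `k₀ ≥ 1` such that any normalized harmonic function on the unit disc
vanishing at the origin with frequency bounded by `N₀` has, for every `r < θ₀`, some radius
`ρ ∈ [r/2, 3r/2]` with at most `k₀` nodal regions in `B_ρ`. -/
theorem S_subset_T (N₀ : ℝ) (hN₀ : 0 < N₀) :
    ∃ θ₀ : ℝ, θ₀ ∈ Set.Ioo (0 : ℝ) (1/2) ∧
      ∃ k₀ : ℕ, 1 ≤ k₀ ∧
        ∀ u : EuclideanSpace ℝ (Fin 2) → ℝ,
          HarmonicFnOn u (ball (0 : EuclideanSpace ℝ (Fin 2)) 1) →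
          u 0 = 0 →
          (∫ x in ball (0 : EuclideanSpace ℝ (Fin 2)) (1/2), (u x) ^ 2) = 1 →
          (∀ r ∈ Set.Ioo (0 : ℝ) 1, freqN u 0 r ≤ N₀) →
          ∀ r : ℝ, 0 < r → r < θ₀ →
            ∃ ρ ∈ Set.Icc (r/2) (3*r/2),
              (nodalComponents
                {x | x ∈ ball (0 : EuclideanSpace ℝ (Fin 2)) ρ ∧ u x ≠ 0}).Finite ∧
              (nodalComponents
                {x | x ∈ ball (0 : EuclideanSpace ℝ (Fin 2)) ρ ∧ u x ≠ 0}).ncard ≤ k₀ := by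
  obtain ⟨θ₀, hθ₀, k₀, hk₀, h⟩ := S_subset_T_general N₀
  refine ⟨θ₀, hθ₀, k₀, hk₀, fun u hu _ _ hfreq r hr hrθ => ⟨r, ⟨by linarith, by linarith⟩, ?_⟩⟩
  have hs : r / θ₀ ∈ Set.Ioo (0 : ℝ) 1 := ⟨div_pos hr hθ₀.1, (div_lt_one hθ₀.1).2 hrθ⟩
  simpa only [mul_div_cancel₀ r hθ₀.1.ne'] using h u 1 (r / θ₀) hu hs.1 hs.2 (hfreq _ hs)
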